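/- arXiv:1507.01934 — 2 statements merged into one kernel-verified Lean document; each statement's English description precedes it below -/
import Mathlib

section
/- For all positive integers h and k there is a positive integer f(h,k) such that every h-semicomplete digraph with pathwidth at least f(h,k) contains a semicomplete subgraph (an induced subgraph on some vertex subset that is 0-semicomplete) whose pathwidth is at least k. -/
namespace AlmostSemicomplete

variable {V : Type} [Fintype V] [DecidableEq V]

/-- The closed out-neighborhood `N⁺[U]`. -/
def closedOut (E : V → V → Prop) [DecidableRel E] (U : Finset V) : Finset V :=
  U.biUnion fun u => insert u (Finset.univ.filter fun w => E u w)

/-- The closed in-neighborhood `N⁻[U]`. -/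
def closedIn (E : V → V → Prop) [DecidableRel E] (U : Finset V) : Finset V :=
  U.biUnion fun u => insert u (Finset.univ.filter fun w => E w u)

/-- The open out-neighborhood `N⁺(U)`. -/
def openOut (E : V → V → Prop) [DecidableRel E] (U : Finset V) : Finset V :=
  closedOut E U \ U

/-- The open in-neighborhood `N⁻(U)`. -/
def openIn (E : V → V → Prop) [DecidableRel E] (U : Finset V) : Finset V :=
  closedIn E U \ U

/-- `d⁺(U)`, the number of out-neighbors of the set `U`. -/
def dOut (E : V → V → Prop) [DecidableRel E] (U : Finset V) : ℕ := (openOut E U).card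

/-- `d⁻(U)`, the number of in-neighbors of the set `U`. -/
def dIn (E : V → V → Prop) [DecidableRel E] (U : Finset V) : ℕ := (openIn E U).card

/-- Out-neighbors of a vertex. -/
def NoutV (E : V → V → Prop) [DecidableRel E] (v : V) : Finset V :=
  Finset.univ.filter fun w => E v w

/-- In-neighbors of a vertex. -/
def NinV (E : V → V → Prop) [DecidableRel E] (v : V) : Finset V :=
  Finset.univ.filter fun w => E w v

/-- Out-degree of a vertex. -/
def dOutV (E : V → V → Prop) [DecidableRel E] (v : V) : ℕ := (NoutV E v).card

/-- In-degree of a vertex. -/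
def dInV (E : V → V → Prop) [DecidableRel E] (v : V) : ℕ := (NinV E v).card

/-- A separation of a digraph: `A ∪ B = V` and no edge from `A ∖ B` to `B ∖ A`. -/
def IsSep (E : V → V → Prop) (A B : Finset V) : Prop :=
  A ∪ B = Finset.univ ∧ ∀ a ∈ A, a ∉ B → ∀ b ∈ B, b ∉ A → ¬ E a b

/-- An `S`–`T` separation. -/
def IsSTSep (E : V → V → Prop) (S T A B : Finset V) : Prop :=
  IsSep E A B ∧ S ∩ B = ∅ ∧ T ∩ A = ∅

/-- A minimum `S`–`T` separation, i.e. one of smallest order `|A ∩ B|`. -/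
def IsMinSTSep (E : V → V → Prop) (S T X Y : Finset V) : Prop :=
  IsSTSep E S T X Y ∧ ∀ A B : Finset V, IsSTSep E S T A B → (X ∩ Y).card ≤ (A ∩ B).card

/-- A separation chain: a list of separations with the first components nondecreasing
and the second components nonincreasing. -/
def IsSepChain (E : V → V → Prop) (C : List (Finset V × Finset V)) : Prop :=
  (∀ p ∈ C, IsSep E p.1 p.2) ∧ List.Chain' (fun p q => p.1 ⊆ q.1 ∧ q.2 ⊆ p.2) C

/-- A separation chain is gapless if consecutive separations differ by at most one vertex
on at least one side. -/
def Gapless (C : List (Finset V × Finset V)) : Prop :=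
  List.Chain' (fun p q => (q.1 \ p.1).card ≤ 1 ∨ (p.2 \ q.2).card ≤ 1) C

/-- A separation chain is nice if consecutive separations differ by at most one vertex
on both sides. -/
def Nice (C : List (Finset V × Finset V)) : Prop :=
  List.Chain' (fun p q => (q.1 \ p.1).card ≤ 1 ∧ (p.2 \ q.2).card ≤ 1) C

/-- An `S`–`T` chain: a separation chain whose first separation has second component
`V ∖ S` and whose last separation has first component `V ∖ T`. -/
def IsSTChain (E : V → V → Prop) (S T : Finset V) (C : List (Finset V × Finset V)) : Prop :=
  IsSepChain E C ∧ C.head?.map Prod.snd = some (Finset.univ \ S) ∧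
    C.getLast?.map Prod.fst = some (Finset.univ \ T)

/-- An `S`–`T` chain is tight if `A_0 = N⁺[S]` and `B_r = N⁻[T]`. -/
def Tight (E : V → V → Prop) [DecidableRel E] (S T : Finset V)
    (C : List (Finset V × Finset V)) : Prop :=
  C.head?.map Prod.fst = some (closedOut E S) ∧
    C.getLast?.map Prod.snd = some (closedIn E T)

/-- The order of a separation chain: the maximum order of its member separations. -/
def chainOrder (C : List (Finset V × Finset V)) : ℕ :=
  (C.map fun p => (p.1 ∩ p.2).card).foldr max 0

/-- The chain has order at most `k`. -/
def orderLE (C : List (Finset V × Finset V)) (k : ℕ) : Prop :=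
  ∀ p ∈ C, (p.1 ∩ p.2).card ≤ k

/-- A path decomposition of a digraph. -/
def IsPathDecomp {m : ℕ} (E : V → V → Prop) (X : Fin m → Finset V) : Prop :=
  (∀ v : V, ∃ i, v ∈ X i) ∧
  (∀ u v : V, E u v → ∃ i j : Fin m, j ≤ i ∧ u ∈ X i ∧ v ∈ X j) ∧
  (∀ (v : V) (i j k : Fin m), i ≤ j → j ≤ k → v ∈ X i → v ∈ X k → v ∈ X j)

/-- The width of a path decomposition: maximum bag size minus one. -/
def pdWidth {m : ℕ} (X : Fin m → Finset V) : ℕ :=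
  (Finset.univ.sup fun i => (X i).card) - 1

/-- The pathwidth of a digraph. -/
noncomputable def pathwidth (E : V → V → Prop) : ℕ :=
  sInf {k | ∃ (m : ℕ) (X : Fin m → Finset V), IsPathDecomp E X ∧ pdWidth X = k}

/-- An `h`-semicomplete digraph: every vertex has at most `h` non-neighbors. -/
def HSemicomplete (E : V → V → Prop) [DecidableRel E] (h : ℕ) : Prop :=
  ∀ v : V, (Finset.univ.filter fun u => u ≠ v ∧ ¬ E u v ∧ ¬ E v u).card ≤ h

/-- A semicomplete digraph: between any two distinct vertices there is an edge in
at least one direction. -/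
def Semicomplete (E : V → V → Prop) : Prop := ∀ u v : V, u ≠ v → E u v ∨ E v u

/-- A `k`-admissible pair `(S, T)`. -/
def kAdmissible (E : V → V → Prop) [DecidableRel E] (k : ℕ) (S T : Finset V) : Prop :=
  closedOut E S ∩ T = ∅ ∧ dOut E S ≤ k ∧ dIn E T ≤ k

/-- The potential `μ(S,T) = 2|V ∖ (N⁺[S] ∪ N⁻[T])| + |N⁺(S) Δ N⁻(T)|`. -/
def mu (E : V → V → Prop) [DecidableRel E] (S T : Finset V) : ℕ :=
  2 * (Finset.univ \ (closedOut E S ∪ closedIn E T)).card +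
    (symmDiff (openOut E S) (openIn E T)).card

/-- The wildness of a vertex. -/
def wld (E : V → V → Prop) [DecidableRel E] (v : V) : ℕ :=
  ((Finset.univ.filter fun u => dOutV E u ≤ dOutV E v) \ NoutV E v).card

/-- A `(d, l, k)`-degree tangle. -/
def IsDegTangle (E : V → V → Prop) [DecidableRel E] (d l k : ℕ) (T : Finset V) : Prop :=
  T.card = l ∧ ∀ v ∈ T, d ≤ dOutV E v ∧ dOutV E v ≤ d + k

/-- A `(d, l, k)`-matching tangle. -/
def IsMatchTangle (E : V → V → Prop) [DecidableRel E] (d l k : ℕ)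
    (T₁ T₂ : Finset V) : Prop :=
  T₁.card = l ∧ T₂.card = l ∧ (∀ v ∈ T₁, dOutV E v ≤ d) ∧
    (∀ v ∈ T₂, d + k + 1 ≤ dOutV E v) ∧
    ∃ φ : V → V, Set.BijOn φ ↑T₁ ↑T₂ ∧ ∀ v ∈ T₁, E v (φ v)

/-- A `(d, l, w)`-spider. -/
def IsSpider (E : V → V → Prop) [DecidableRel E] (d l w : ℕ) (T : Finset V)
    (L R : V → Finset V) : Prop :=
  l ≤ T.card ∧ ∀ v ∈ T,
    L v ⊆ NinV E v ∧ 3 * l ≤ (L v).card ∧ (∀ u ∈ L v, dOutV E u ≤ d) ∧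
    R v ⊆ NoutV E v ∧ 3 * l ≤ (R v).card ∧ (∀ u ∈ R v, d + w ≤ dOutV E u)

/-- Tameness of a left-side vertex of a `(d,l,w)`-spider:
`wld(u) ≤ 3l + d + w − d⁺(u) + 2·pw(G)`, stated additively. -/
def LeftTame (E : V → V → Prop) [DecidableRel E] (d l w : ℕ) (u : V) : Prop :=
  wld E u + dOutV E u ≤ 3 * l + d + w + 2 * pathwidth E

/-- Tameness of a right-side vertex of a `(d,l,w)`-spider:
`wld(u) ≤ 3l + d⁺(u) − d + 2·pw(G)`, stated additively. -/
def RightTame (E : V → V → Prop) [DecidableRel E] (d l w : ℕ) (u : V) : Prop :=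
  wld E u + d ≤ 3 * l + dOutV E u + 2 * pathwidth E

/-- A tame `(d, l, w)`-spider: each `L_v` and each `R_v` contains at least `2l`
tame vertices. -/
def IsTameSpider (E : V → V → Prop) [DecidableRel E] (d l w : ℕ) (T : Finset V)
    (L R : V → Finset V) : Prop :=
  IsSpider E d l w T L R ∧ ∀ v ∈ T,
    (∃ L' ⊆ L v, 2 * l ≤ L'.card ∧ ∀ u ∈ L', LeftTame E d l w u) ∧
    (∃ R' ⊆ R v, 2 * l ≤ R'.card ∧ ∀ u ∈ R', RightTame E d l w u)



/-- an obstruction to small pathwidth -/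
def Obs (E : V → V → Prop) [DecidableRel E] (n P : ℕ) : Prop :=
  ∃ I : Finset (V × V), n ≤ I.card ∧ (∀ p ∈ I, p.1 = p.2 ∨ E p.1 p.2) ∧
    (∀ p ∈ I, ∀ q ∈ I, p ≠ q → p.1 ≠ q.1 ∧ p.1 ≠ q.2 ∧ p.2 ≠ q.2) ∧
    ∀ p ∈ I, ∀ q ∈ I, p.2 = q.1 ∨
      P ≤ (Finset.univ.filter fun x => E p.2 x ∧ E x q.1).card

theorem greedy_indep {α : Type*} [DecidableEq α] (I : Finset α) (r : α → α → Prop)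
    [DecidableRel r] (hs : ∀ p q, r p q → r q p) (D : ℕ) (hD : 0 < D)
    (hI : ∀ p ∈ I, (I.filter fun q => q = p ∨ r p q).card ≤ D) :
    ∀ n : ℕ, n * D ≤ I.card →
      ∃ J ⊆ I, J.card = n ∧ ∀ p ∈ J, ∀ q ∈ J, p ≠ q → ¬ r p q := by
  intro n
  induction n with
  | zero => intro _; exact ⟨∅, by simp, by simp, by simp⟩
  | succ n ih =>
    intro hn
    obtain ⟨J, hJI, hJc, hJ⟩ := ih (by rw [Nat.succ_mul] at hn; omega)
    have hb : (J.biUnion fun p => I.filter fun q => q = p ∨ r p q).card ≤ n * D := by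
      rw [← hJc]
      exact Finset.card_biUnion_le_card_mul _ _ _ (fun p hp => hI p (hJI hp))
    have : ∃ q ∈ I, q ∉ (J.biUnion fun p => I.filter fun q => q = p ∨ r p q) := by
      apply Finset.exists_mem_notMem_of_card_lt_card
      rw [Nat.succ_mul] at hn; omega
    obtain ⟨q, hqI, hq⟩ := this
    simp only [Finset.mem_biUnion, Finset.mem_filter, not_exists, not_and, not_or] at hq
    have hqJ : q ∉ J := fun h => (hq q h hqI).1 rfl
    refine ⟨insert q J, ?_, ?_, ?_⟩
    · intro x hx
      rcases Finset.mem_insert.1 hx with rfl | hx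
      · exact hqI
      · exact hJI hx
    · rw [Finset.card_insert_of_notMem hqJ, hJc]
    · intro p hp s hs' hne
      rcases Finset.mem_insert.1 hp with rfl | hp2 <;>
        rcases Finset.mem_insert.1 hs' with rfl | hs2
      · exact absurd rfl hne
      · exact fun h => (hq s hs2 hqI).2 (hs _ _ h)
      · exact (hq p hp2 hqI).2
      · exact hJ p hp2 s hs2 hne

theorem pathwidth_le_of_chain (E : V → V → Prop) [DecidableRel E] (D : ℕ → Finset V) (m w : ℕ)
    (hmono : Monotone D) (h0 : D 0 = ∅) (hm : D m = Finset.univ)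
    (hw : ∀ t, ((D (t+1) ∪ (D (t+1)).biUnion (NoutV E)) \ D t).card ≤ w) :
    pathwidth E ≤ w := by
  have key : ∀ v : V, ∀ s, v ∈ D s → ∃ t < s, v ∉ D t ∧ v ∈ D (t+1) := by
    intro v s
    induction s with
    | zero => intro h; rw [h0] at h; simp at h
    | succ s ih =>
      intro h
      by_cases hv : v ∈ D s
      · obtain ⟨t, ht, h1⟩ := ih hv
        exact ⟨t, by omega, h1⟩
      · exact ⟨s, by omega, hv, h⟩
  refine le_trans (Nat.sInf_le ⟨m, fun t : Fin m =>
    (D (t+1) ∪ (D (t+1)).biUnion (NoutV E)) \ D t, ⟨?_, ?_, ?_⟩, rfl⟩) ?_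
  · intro v
    obtain ⟨t, ht, h1, h2⟩ := key v m (by rw [hm]; simp)
    exact ⟨⟨t, ht⟩, by simp [h1, h2]⟩
  · intro u v huv
    obtain ⟨t, ht, h1, h2⟩ := key u m (by rw [hm]; simp)
    by_cases hv : v ∈ D t
    · obtain ⟨s, hs, h3, h4⟩ := key v t hv
      refine ⟨⟨t, ht⟩, ⟨s, by omega⟩, ?_, by simp [h1, h2], by simp [h3, h4]⟩
      simp only [Fin.mk_le_mk]; omega
    · refine ⟨⟨t, ht⟩, ⟨t, ht⟩, le_rfl, by simp [h1, h2], ?_⟩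
      simp only [Finset.mem_sdiff, Finset.mem_union, Finset.mem_biUnion]
      exact ⟨Or.inr ⟨u, h2, by simp [NoutV, huv]⟩, hv⟩
  · intro v i j k hij hjk hi hk
    simp only [Finset.mem_sdiff] at hi hk ⊢
    have hm1 : D (i+1) ⊆ D (j+1) := hmono (by have : (i : ℕ) ≤ j := hij; omega)
    have hm2 : D j ⊆ D k := hmono (by have : (j : ℕ) ≤ k := hjk; omega)
    refine ⟨?_, fun h => hk.2 (hm2 h)⟩
    exact (Finset.union_subset_union hm1 (Finset.biUnion_subset_biUnion_of_subset_left _ hm1)) hi.1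
  · unfold pdWidth
    refine le_trans (Nat.sub_le _ _) (Finset.sup_le ?_)
    intro i _
    exact hw i

theorem le_pathwidth_of_links (E : V → V → Prop) (k : ℕ)
    {ι : Type*} [Fintype ι] (c a : ι → V)
    (hι : k + 1 ≤ Fintype.card ι)
    (h1 : ∀ i, c i = a i ∨ E (c i) (a i))
    (h2 : ∀ i j, i ≠ j → c i ≠ c j ∧ c i ≠ a j ∧ a i ≠ a j)
    (h3 : ∀ i j, a i = c j ∨ ∃ Q : Finset V, k + 1 ≤ Q.card ∧ ∀ x ∈ Q, E (a i) x ∧ E x (c j)) :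
    k ≤ pathwidth E := by
  by_contra hlt
  push Not at hlt
  have hne : {k | ∃ (m : ℕ) (X : Fin m → Finset V), IsPathDecomp E X ∧ pdWidth X = k}.Nonempty := by
    refine ⟨_, 1, fun _ => Finset.univ, ⟨fun v => ⟨0, by simp⟩, fun u v _ => ⟨0, 0, by simp⟩,
      by simp⟩, rfl⟩
  obtain ⟨m, X, ⟨hc, he, hi⟩, hX⟩ := Nat.sInf_mem hne
  change pdWidth X = pathwidth E at hX
  have hbag : ∀ t, (X t).card ≤ k := by
    intro t
    have : (X t).card ≤ Finset.univ.sup fun i => (X i).card :=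
      Finset.le_sup (f := fun i => (X i).card) (Finset.mem_univ t)
    unfold pdWidth at hX
    omega
  have hlo : ∀ v, ∃ l r : Fin m, ∀ t, v ∈ X t ↔ l ≤ t ∧ t ≤ r := by
    intro v
    have hn : (Finset.univ.filter fun t => v ∈ X t).Nonempty := by
      obtain ⟨i, hi⟩ := hc v
      exact ⟨i, by simpa using hi⟩
    refine ⟨Finset.min' _ hn, Finset.max' _ hn, fun t => ⟨fun ht => ⟨?_, ?_⟩, fun ht => ?_⟩⟩
    · exact Finset.min'_le _ _ (by simpa using ht)
    · exact Finset.le_max' _ _ (by simpa using ht)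
    · have q1 := Finset.min'_mem _ hn
      have q2 := Finset.max'_mem _ hn
      rw [Finset.mem_filter] at q1 q2
      exact hi v _ t _ ht.1 ht.2 q1.2 q2.2
  choose l r hlr using hlo
  have hlr' : ∀ v, l v ≤ r v := by
    intro v
    obtain ⟨i, hi⟩ := hc v
    exact ((hlr v i).1 hi).1.trans ((hlr v i).1 hi).2
  have hE : ∀ u v, E u v → l v ≤ r u := by
    intro u v huv
    obtain ⟨i, j, hji, hu, hv⟩ := he u v huv
    exact ((hlr v j).1 hv).1.trans (hji.trans ((hlr u i).1 hu).2)
  have hac : ∀ i j, l (c j) ≤ r (a i) := by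
    intro i j
    rcases h3 i j with h | ⟨Q, hQ, hQE⟩
    · rw [h]; exact hlr' _
    · by_contra hcon
      push Not at hcon
      have : Q ⊆ X (r (a i)) := by
        intro x hx
        rw [hlr]
        exact ⟨hE _ _ (hQE x hx).1, hcon.le.trans (hE _ _ (hQE x hx).2)⟩
      have := Finset.card_le_card this
      have := hbag (r (a i))
      omega
  have : Nonempty ι := Fintype.card_pos_iff.1 (by omega)
  obtain ⟨j, -, hj⟩ := Finset.exists_min_image Finset.univ (fun i => r (a i)) Finset.univ_nonempty
  have hsel : ∀ i, ∃ v, (v = c i ∨ v = a i) ∧ v ∈ X (r (a j)) := by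
    intro i
    by_cases hci : c i ∈ X (r (a j))
    · exact ⟨c i, Or.inl rfl, hci⟩
    · refine ⟨a i, Or.inr rfl, ?_⟩
      rw [hlr]
      refine ⟨?_, hj i (by simp)⟩
      rw [hlr] at hci
      have h5 : r (c i) < r (a j) := by
        by_contra h6
        push Not at h6
        exact hci ⟨hac j i, h6⟩
      rcases h1 i with h | h
      · rw [← h]; exact hac j i
      · exact (hE _ _ h).trans h5.le
  choose s hs1 hs2 using hsel
  have hinj : Function.Injective s := by
    intro i i' hii
    by_contra hne'
    have p1 := h2 i i' hne'
    have p2 := h2 i' i (Ne.symm hne')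
    rcases hs1 i with h | h <;> rcases hs1 i' with h' | h' <;> rw [h, h'] at hii
    · exact p1.1 hii
    · exact p1.2.1 hii
    · exact p2.2.1 hii.symm
    · exact p1.2.2 hii
  have : (Finset.univ.image s).card = Fintype.card ι := by
    rw [Finset.card_image_of_injective _ hinj]; rfl
  have h7 : Finset.univ.image s ⊆ X (r (a j)) := by
    intro x hx
    obtain ⟨i, -, rfl⟩ := Finset.mem_image.1 hx
    exact hs2 i
  have := Finset.card_le_card h7
  have := hbag (r (a j))
  omega

/-- clique in the underlying graph -/
def Clq (E : V → V → Prop) (W : Finset V) : Prop :=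
  ∀ x ∈ W, ∀ y ∈ W, x ≠ y → E x y ∨ E y x

theorem clq_add (E : V → V → Prop) [DecidableRel E] (h : ℕ) (hE : HSemicomplete E h)
    (W Q : Finset V) (hW : Clq E W) :
    ∀ q : ℕ, (h + 1) * (W.card + q) ≤ Q.card →
    ∃ W', W ⊆ W' ∧ Clq E W' ∧ W'.card ≤ W.card + q ∧ q ≤ (W' ∩ Q).card := by
  intro q
  induction q with
  | zero => intro _; exact ⟨W, subset_rfl, hW, by simp, by simp⟩
  | succ q ih =>
    intro hq
    obtain ⟨W', hWW, hC, hc1, hc2⟩ := ih (by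
      refine le_trans (Nat.mul_le_mul_left _ ?_) hq; omega)
    have hb : (W'.biUnion fun v => insert v
        (Finset.univ.filter fun u => u ≠ v ∧ ¬ E u v ∧ ¬ E v u)).card ≤ W'.card * (h+1) := by
      apply Finset.card_biUnion_le_card_mul
      intro v _
      exact (Finset.card_insert_le _ _).trans (Nat.succ_le_succ (hE v))
    have : ∃ x ∈ Q, x ∉ (W'.biUnion fun v => insert v
        (Finset.univ.filter fun u => u ≠ v ∧ ¬ E u v ∧ ¬ E v u)) := by
      apply Finset.exists_mem_notMem_of_card_lt_card
      have h1 : W'.card * (h+1) ≤ (W.card + q) * (h+1) := Nat.mul_le_mul_right _ hc1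
      have h2 : (h + 1) * (W.card + (q+1)) = (W.card + q) * (h+1) + (h+1) := by ring
      omega
    obtain ⟨x, hxQ, hx⟩ := this
    simp only [Finset.mem_biUnion, Finset.mem_insert, Finset.mem_filter, Finset.mem_univ, true_and,
      not_exists, not_and, not_or] at hx
    have hxW : x ∉ W' := fun hh => (hx x hh).1 rfl
    have hadj : ∀ y ∈ W', E x y ∨ E y x := by
      intro y hy
      have := (hx y hy).2 (hx y hy).1
      tauto
    refine ⟨insert x W', hWW.trans (Finset.subset_insert _ _), ?_, ?_, ?_⟩
    · intro u hu v hv hne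
      rcases Finset.mem_insert.1 hu with rfl | hu2 <;>
        rcases Finset.mem_insert.1 hv with rfl | hv2
      · exact absurd rfl hne
      · exact hadj v hv2
      · exact (hadj u hu2).symm
      · exact hC u hu2 v hv2 hne
    · rw [Finset.card_insert_of_notMem hxW]; omega
    · rw [Finset.insert_inter_of_mem hxQ, Finset.card_insert_of_notMem (by simp [hxW])]; omega

theorem clq_add_many (E : V → V → Prop) [DecidableRel E] (h : ℕ) (hE : HSemicomplete E h)
    {ι : Type*} [DecidableEq ι] (Q : ι → Finset V) (q B : ℕ) (W : Finset V) (hW : Clq E W)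
    (D : Finset ι) :
    (h + 1) * (W.card + q * D.card) ≤ B → (∀ d ∈ D, B ≤ (Q d).card) →
    ∃ W', W ⊆ W' ∧ Clq E W' ∧ W'.card ≤ W.card + q * D.card ∧ ∀ d ∈ D, q ≤ (W' ∩ Q d).card := by
  induction D using Finset.induction_on with
  | empty => intro _ _; exact ⟨W, subset_rfl, hW, by simp, by simp⟩
  | insert d D hd ih =>
    intro hB hQ
    rw [Finset.card_insert_of_notMem hd, Nat.mul_succ] at hB
    obtain ⟨W', hWW, hC, hc1, hc2⟩ := ih (by
      refine le_trans (Nat.mul_le_mul_left _ ?_) hB; omega)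
      (fun e he => hQ e (Finset.mem_insert_of_mem he))
    obtain ⟨W'', hWW2, hC2, hc3, hc4⟩ := clq_add E h hE W' (Q d) hC q (by
      refine le_trans (Nat.mul_le_mul_left _ ?_) (hB.trans (hQ d (Finset.mem_insert_self _ _)))
      omega)
    refine ⟨W'', hWW.trans hWW2, hC2, ?_, ?_⟩
    · rw [Finset.card_insert_of_notMem hd, Nat.mul_succ]; omega
    · intro e he
      rcases Finset.mem_insert.1 he with rfl | he
      · exact hc4
      · exact (hc2 e he).trans (Finset.card_le_card (Finset.inter_subset_inter_right hWW2))

theorem extract_pairs (E : V → V → Prop) [DecidableRel E] (h m : ℕ) (hE : HSemicomplete E h)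
    (I : Finset (V × V)) (hIc : m * (4*h+1) ≤ I.card)
    (hI2 : ∀ p ∈ I, ∀ q ∈ I, p ≠ q → p.1 ≠ q.1 ∧ p.1 ≠ q.2 ∧ p.2 ≠ q.2) :
    ∃ J ⊆ I, J.card = m ∧ ∀ p ∈ J, ∀ q ∈ J, p ≠ q →
      ∀ x y, (x = p.1 ∨ x = p.2) → (y = q.1 ∨ y = q.2) → x ≠ y → E x y ∨ E y x := by
  classical
  obtain ⟨na, hnad⟩ : ∃ na : V → V → Prop, ∀ x y, na x y ↔ (y ≠ x ∧ ¬ E y x ∧ ¬ E x y) :=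
    ⟨_, fun _ _ => Iff.rfl⟩
  have hna : ∀ x y, na x y → na y x := fun x y hh => by
    rw [hnad] at hh ⊢
    exact ⟨hh.1.symm, hh.2.2, hh.2.1⟩
  obtain ⟨r, hr⟩ : ∃ r : V × V → V × V → Prop, ∀ p q, r p q ↔
    ((na p.1 q.1 ∨ na p.1 q.2) ∨ (na p.2 q.1 ∨ na p.2 q.2)) := ⟨_, fun _ _ => Iff.rfl⟩
  have hinj1 : Set.InjOn Prod.fst (I : Set (V × V)) := by
    intro p hp q hq hpq
    by_contra hne
    exact (hI2 p hp q hq hne).1 hpq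
  have hinj2 : Set.InjOn Prod.snd (I : Set (V × V)) := by
    intro p hp q hq hpq
    by_contra hne
    exact (hI2 p hp q hq hne).2.2 hpq
  have hcnt1 : ∀ x, (I.filter fun q => na x q.1).card ≤ h := by
    intro x
    refine le_trans (Finset.card_le_card_of_injOn Prod.fst ?_ ?_) (hE x)
    · intro q hq
      simpa [hnad] using (Finset.mem_filter.1 hq).2
    · exact hinj1.mono (fun q hq => (Finset.mem_filter.1 hq).1)
  have hcnt2 : ∀ x, (I.filter fun q => na x q.2).card ≤ h := by
    intro x
    refine le_trans (Finset.card_le_card_of_injOn Prod.snd ?_ ?_) (hE x)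
    · intro q hq
      simpa [hnad] using (Finset.mem_filter.1 hq).2
    · exact hinj2.mono (fun q hq => (Finset.mem_filter.1 hq).1)
  obtain ⟨J, hJI, hJc, hJ⟩ := greedy_indep I r
    (by
      intro p q hpq
      have e1 := hna p.1 q.1
      have e2 := hna p.1 q.2
      have e3 := hna p.2 q.1
      have e4 := hna p.2 q.2
      rw [hr] at hpq ⊢
      tauto) (4*h+1) (by omega)
    (by
      intro p hp
      have : (I.filter fun q => q = p ∨ r p q) ⊆
          {p} ∪ (((I.filter fun q => na p.1 q.1) ∪ (I.filter fun q => na p.1 q.2)) ∪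
          ((I.filter fun q => na p.2 q.1) ∪ (I.filter fun q => na p.2 q.2))) := by
        intro q hq
        simp only [Finset.mem_union, Finset.mem_filter, Finset.mem_singleton, hr] at hq ⊢
        tauto
      have h1 := Finset.card_le_card this
      have h2 := Finset.card_union_le {p} (((I.filter fun q => na p.1 q.1) ∪ (I.filter fun q => na p.1 q.2)) ∪
          ((I.filter fun q => na p.2 q.1) ∪ (I.filter fun q => na p.2 q.2)))
      have h3 := Finset.card_union_le ((I.filter fun q => na p.1 q.1) ∪ (I.filter fun q => na p.1 q.2))
          ((I.filter fun q => na p.2 q.1) ∪ (I.filter fun q => na p.2 q.2))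
      have h4 := Finset.card_union_le (I.filter fun q => na p.1 q.1) (I.filter fun q => na p.1 q.2)
      have h5 := Finset.card_union_le (I.filter fun q => na p.2 q.1) (I.filter fun q => na p.2 q.2)
      have := hcnt1 p.1
      have := hcnt1 p.2
      have := hcnt2 p.1
      have := hcnt2 p.2
      rw [Finset.card_singleton] at h2
      omega) m hIc
  refine ⟨J, hJI, hJc, ?_⟩
  intro p hp q hq hpq x y hxp hyq hne
  have := hJ p hp q hq hpq
  rw [hr] at this
  have h10 : ¬ na x y := by
    rcases hxp with rfl | rfl <;> rcases hyq with rfl | rfl <;> tauto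
  rw [hnad] at h10
  have h9 := hne.symm
  tauto

theorem extract (E : V → V → Prop) [DecidableRel E] (h k n P : ℕ) (hE : HSemicomplete E h)
    (hn : n = (k+1) * (4*h+1)) (hP : P = (h+1) * (2*(k+1) + (k+1) * ((k+1)*(k+1))))
    (hO : Obs E n P) :
    ∃ W : Finset V, Semicomplete (fun a b : {x // x ∈ W} => E a.1 b.1) ∧
          k ≤ pathwidth (fun a b : {x // x ∈ W} => E a.1 b.1) := by
  classical
  obtain ⟨I, hIc, hI1, hI2, hI3⟩ := hO
  obtain ⟨J, hJI, hJc, hJ⟩ := extract_pairs E h (k+1) hE I (by rw [← hn]; exact hIc) hI2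
  let W0 := J.image Prod.fst ∪ J.image Prod.snd
  have hW0c : W0.card ≤ 2 * (k+1) := by
    have h1 := Finset.card_union_le (J.image Prod.fst) (J.image Prod.snd)
    have h2 := Finset.card_image_le (s := J) (f := Prod.fst)
    have h3 := Finset.card_image_le (s := J) (f := Prod.snd)
    simp only [W0]
    omega
  have hW0 : Clq E W0 := by
    have hmem : ∀ x ∈ W0, ∃ p ∈ J, x = p.1 ∨ x = p.2 := by
      intro x hx
      rcases Finset.mem_union.1 hx with hx | hx <;> obtain ⟨p, hp, rfl⟩ := Finset.mem_image.1 hx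
      · exact ⟨p, hp, Or.inl rfl⟩
      · exact ⟨p, hp, Or.inr rfl⟩
    intro x hx y hy hne
    obtain ⟨p, hp, hxp⟩ := hmem x hx
    obtain ⟨q, hq, hyq⟩ := hmem y hy
    by_cases hpq : p = q
    · subst hpq
      have := hI1 p (hJI hp)
      rcases hxp with rfl | rfl <;> rcases hyq with rfl | rfl
      · exact absurd rfl hne
      · tauto
      · have h8 := hne.symm
        tauto
      · exact absurd rfl hne
    · exact hJ p hp q hq hpq x y hxp hyq hne
  let D := (J ×ˢ J).filter fun d => d.1.2 ≠ d.2.1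
  have hDc : D.card ≤ (k+1)*(k+1) := by
    refine (Finset.card_filter_le _ _).trans ?_
    rw [Finset.card_product, hJc]
  obtain ⟨W, hWW, hWC, -, hWQ⟩ := clq_add_many E h hE
    (fun d : (V × V) × (V × V) => Finset.univ.filter fun x => E d.1.2 x ∧ E x d.2.1)
    (k+1) P W0 hW0 D
    (by
      rw [hP]
      apply Nat.mul_le_mul_left
      exact Nat.add_le_add hW0c (Nat.mul_le_mul_left _ hDc))
    (by
      intro d hd
      simp only [D, Finset.mem_filter, Finset.mem_product] at hd
      rcases hI3 d.1 (hJI hd.1.1) d.2 (hJI hd.1.2) with hh | hh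
      · exact absurd hh hd.2
      · exact hh)
  have hm1 : ∀ p ∈ J, p.1 ∈ W := fun p hp =>
    hWW (Finset.mem_union_left _ (Finset.mem_image_of_mem _ hp))
  have hm2 : ∀ p ∈ J, p.2 ∈ W := fun p hp =>
    hWW (Finset.mem_union_right _ (Finset.mem_image_of_mem _ hp))
  refine ⟨W, ?_, ?_⟩
  · intro u v huv
    exact hWC u.1 u.2 v.1 v.2 (fun hh => huv (Subtype.ext hh))
  · refine le_pathwidth_of_links _ k (ι := {p // p ∈ J})
      (fun p => ⟨p.1.1, hm1 _ p.2⟩) (fun p => ⟨p.1.2, hm2 _ p.2⟩) ?_ ?_ ?_ ?_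
    · simp [hJc]
    · intro p
      rcases hI1 p.1 (hJI p.2) with hh | hh
      · exact Or.inl (Subtype.ext hh)
      · exact Or.inr hh
    · intro p q hpq
      have := hI2 p.1 (hJI p.2) q.1 (hJI q.2) (fun hh => hpq (Subtype.ext hh))
      simpa [Subtype.ext_iff] using this
    · intro p q
      by_cases hpq : p.1.2 = q.1.1
      · exact Or.inl (Subtype.ext hpq)
      · right
        have := hWQ (p.1, q.1) (by simp [D, hpq])
        refine ⟨(W ∩ Finset.univ.filter fun x => E p.1.2 x ∧ E x q.1.1).subtype (· ∈ W), ?_, ?_⟩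
        · rw [Finset.card_subtype, Finset.filter_true_of_mem]
          · exact this
          · intro x hx
            exact (Finset.mem_inter.1 hx).1
        · intro x hx
          simp only [Finset.mem_subtype, Finset.mem_inter, Finset.mem_filter] at hx
          exact hx.2.2

theorem two_paths (E : V → V → Prop) [DecidableRel E] (h P : ℕ) (hE : HSemicomplete E h)
    (w v : V) (hc : P + h + 1 ≤ (NoutV E w \ NoutV E v).card) :
    P ≤ (Finset.univ.filter fun x => E w x ∧ E x v).card := by
  have : NoutV E w \ NoutV E v ⊆ (Finset.univ.filter fun x => E w x ∧ E x v) ∪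
      (insert v (Finset.univ.filter fun u => u ≠ v ∧ ¬ E u v ∧ ¬ E v u)) := by
    intro x hx
    simp only [NoutV, Finset.mem_sdiff, Finset.mem_union, Finset.mem_insert, Finset.mem_filter,
      Finset.mem_univ, true_and] at hx ⊢
    tauto
  have h1 := Finset.card_le_card this
  have h2 := Finset.card_union_le (Finset.univ.filter fun x => E w x ∧ E x v)
      (insert v (Finset.univ.filter fun u => u ≠ v ∧ ¬ E u v ∧ ¬ E v u))
  have h3 := Finset.card_insert_le v (Finset.univ.filter fun u => u ≠ v ∧ ¬ E u v ∧ ¬ E v u)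
  have h4 := hE v
  omega

theorem obs_of_match (E : V → V → Prop) [DecidableRel E] (h n P d : ℕ) (hE : HSemicomplete E h)
    (I : Finset (V × V)) (hn : n ≤ I.card) (hI : ∀ p ∈ I, E p.1 p.2)
    (hi1 : ∀ p ∈ I, ∀ q ∈ I, p.1 = q.1 → p = q) (hi2 : ∀ p ∈ I, ∀ q ∈ I, p.2 = q.2 → p = q)
    (hd1 : ∀ p ∈ I, dOutV E p.1 < d) (hd2 : ∀ p ∈ I, d + (P + h + 1) ≤ dOutV E p.2) :
    Obs E n P := by
  refine ⟨I, hn, fun p hp => Or.inr (hI p hp), ?_, ?_⟩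
  · intro p hp q hq hne
    refine ⟨fun e => hne (hi1 p hp q hq e), fun e => ?_, fun e => hne (hi2 p hp q hq e)⟩
    have h1 := hd1 p hp
    have h2 := hd2 q hq
    rw [e] at h1
    omega
  · intro p hp q hq
    right
    apply two_paths E h P hE
    have h1 := hd1 q hq
    have h2 := hd2 p hp
    have h3 := Finset.le_card_sdiff (NoutV E q.1) (NoutV E p.2)
    unfold dOutV at h1 h2
    omega

theorem obs_diag (E : V → V → Prop) [DecidableRel E] (n P : ℕ) (F : Finset V) (hn : n ≤ F.card)
    (hF : ∀ u ∈ F, ∀ v ∈ F, u ≠ v → P ≤ (Finset.univ.filter fun x => E u x ∧ E x v).card) :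
    Obs E n P := by
  refine ⟨F.image fun v => (v, v), ?_, ?_, ?_, ?_⟩
  · rw [Finset.card_image_of_injective]
    · exact hn
    · intro a b hab
      exact (Prod.ext_iff.1 hab).1
  · intro p hp
    obtain ⟨v, -, rfl⟩ := Finset.mem_image.1 hp
    exact Or.inl rfl
  · intro p hp q hq hne
    obtain ⟨v, -, rfl⟩ := Finset.mem_image.1 hp
    obtain ⟨w, -, rfl⟩ := Finset.mem_image.1 hq
    have : v ≠ w := fun e => hne (by rw [e])
    exact ⟨this, this, this⟩
  · intro p hp q hq
    obtain ⟨v, hv, rfl⟩ := Finset.mem_image.1 hp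
    obtain ⟨w, hw, rfl⟩ := Finset.mem_image.1 hq
    by_cases hvw : v = w
    · exact Or.inl hvw
    · exact Or.inr (hF v hv w hw hvw)

theorem obs_of_close (E : V → V → Prop) [DecidableRel E] (h n P Q : ℕ) (hE : HSemicomplete E h)
    (hQ : 0 < Q) (T N : Finset V) (hT : (2*Q+h+1) + (2*n + 3*Q + P) ≤ T.card)
    (h1 : ∀ v ∈ T, (NoutV E v \ N).card ≤ Q) (h2 : ∀ v ∈ T, (N \ NoutV E v).card ≤ Q) :
    Obs E n P := by
  have hZ : (T \ N).card ≤ 2*Q+h+1 := by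
    set Z := T \ N with hZdef
    rcases Nat.eq_zero_or_pos Z.card with h0 | hpos
    · omega
    have hdeg : ∀ v ∈ Z, Z.card ≤ (Z.filter fun x => E v x).card + (Z.filter fun x => E x v).card
        + (h+1) := by
      intro v hv
      have : Z ⊆ ((Z.filter fun x => E v x) ∪ (Z.filter fun x => E x v)) ∪
          (insert v (Finset.univ.filter fun u => u ≠ v ∧ ¬ E u v ∧ ¬ E v u)) := by
        intro x hx
        simp only [Finset.mem_union, Finset.mem_insert, Finset.mem_filter,
          Finset.mem_univ, true_and]
        tauto
      have h1 := Finset.card_le_card this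
      have h2 := Finset.card_union_le ((Z.filter fun x => E v x) ∪ (Z.filter fun x => E x v))
          (insert v (Finset.univ.filter fun u => u ≠ v ∧ ¬ E u v ∧ ¬ E v u))
      have h5 := Finset.card_union_le (Z.filter fun x => E v x) (Z.filter fun x => E x v)
      have h3 := Finset.card_insert_le v (Finset.univ.filter fun u => u ≠ v ∧ ¬ E u v ∧ ¬ E v u)
      have h4 := hE v
      omega
    have hs := Finset.sum_le_sum hdeg
    have hout : ∑ v ∈ Z, (Z.filter fun x => E v x).card ≤ ∑ v ∈ Z, Q := by
      apply Finset.sum_le_sum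
      intro v hv
      refine le_trans (Finset.card_le_card ?_) (h1 v (Finset.mem_sdiff.1 hv).1)
      intro x hx
      rw [Finset.mem_filter, hZdef, Finset.mem_sdiff] at hx
      simp [NoutV, hx.1.2, hx.2]
    have hsw : ∑ v ∈ Z, (Z.filter fun x => E v x).card = ∑ v ∈ Z, (Z.filter fun x => E x v).card :=
      Finset.sum_card_bipartiteAbove_eq_sum_card_bipartiteBelow E
    rw [Finset.sum_add_distrib, Finset.sum_add_distrib, ← hsw] at hs
    simp only [Finset.sum_const, smul_eq_mul] at hs hout
    have : Z.card * Z.card ≤ Z.card * (2*Q+h+1) := by nlinarith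
    exact Nat.le_of_mul_le_mul_left this hpos
  set M := T ∩ N with hM
  have hMc : 2*n + 3*Q + P ≤ M.card := by
    have := Finset.card_sdiff_add_card_inter T N
    rw [← hM] at this
    omega
  have hmiss : ∀ u ∈ M, (M.filter fun x => ¬ E u x).card ≤ Q := by
    intro u hu
    refine le_trans (Finset.card_le_card ?_) (h2 u (Finset.mem_inter.1 hu).1)
    intro x hx
    rw [Finset.mem_filter, hM, Finset.mem_inter] at hx
    simp [NoutV, hx.1.2, hx.2]
  have hsw : ∑ u ∈ M, (M.filter fun x => ¬ E u x).card = ∑ x ∈ M, (M.filter fun u => ¬ E u x).card :=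
    Finset.sum_card_bipartiteAbove_eq_sum_card_bipartiteBelow (fun u x => ¬ E u x)
  have hs : ∑ u ∈ M, (M.filter fun x => ¬ E u x).card ≤ M.card * Q := by
    have := Finset.sum_le_sum hmiss
    simpa using this
  set F := M.filter fun v => (M.filter fun u => ¬ E u v).card ≤ 2*Q with hF
  set G := M.filter fun v => ¬ (M.filter fun u => ¬ E u v).card ≤ 2*Q with hG
  have hFG : F.card + G.card = M.card := Finset.card_filter_add_card_filter_not _
  have hGc : G.card * (2*Q) ≤ M.card * Q := by
    rw [hsw] at hs
    refine le_trans ?_ hs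
    calc G.card * (2*Q) = ∑ x ∈ G, 2*Q := by simp
      _ ≤ ∑ x ∈ G, (M.filter fun u => ¬ E u x).card := by
        apply Finset.sum_le_sum
        intro x hx
        have := (Finset.mem_filter.1 hx).2
        omega
      _ ≤ _ := Finset.sum_le_sum_of_subset (Finset.filter_subset _ _)
  have hG2 : G.card * 2 ≤ M.card := by
    apply Nat.le_of_mul_le_mul_right _ hQ
    calc G.card * 2 * Q = G.card * (2*Q) := by ring
      _ ≤ _ := hGc
  apply obs_diag E n P F (by omega)
  intro u hu v hv _
  have hu1 := hmiss u (Finset.mem_filter.1 hu).1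
  have hv1 := (Finset.mem_filter.1 hv).2
  have : M ⊆ ((Finset.univ.filter fun x => E u x ∧ E x v) ∪ (M.filter fun x => ¬ E u x)) ∪
      (M.filter fun x => ¬ E x v) := by
    intro x hx
    simp only [Finset.mem_union, Finset.mem_filter, Finset.mem_univ, true_and]
    tauto
  have h3 := Finset.card_le_card this
  have h4 := Finset.card_union_le ((Finset.univ.filter fun x => E u x ∧ E x v) ∪
    (M.filter fun x => ¬ E u x)) (M.filter fun x => ¬ E x v)
  have h5 := Finset.card_union_le (Finset.univ.filter fun x => E u x ∧ E x v)
    (M.filter fun x => ¬ E u x)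
  omega

theorem obs_of_degree (E : V → V → Prop) [DecidableRel E] (h n P d K Q : ℕ)
    (hE : HSemicomplete E h) (hQ : Q = P + h + 1 + K) (T : Finset V)
    (hT : n * ((2*Q+h+1) + (2*n + 3*Q + P)) ≤ T.card)
    (hd : ∀ v ∈ T, d ≤ dOutV E v ∧ dOutV E v ≤ d + K) : Obs E n P := by
  classical
  let r : V → V → Prop := fun u v =>
    ¬ (P + h + 1 ≤ (NoutV E u \ NoutV E v).card ∧ P + h + 1 ≤ (NoutV E v \ NoutV E u).card)
  by_cases hex : ∃ f ∈ T, (2*Q+h+1) + (2*n + 3*Q + P) ≤ (T.filter fun v => v = f ∨ r f v).card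
  · obtain ⟨f, hf, hc⟩ := hex
    have hclose : ∀ v ∈ T.filter (fun v => v = f ∨ r f v),
        (NoutV E v \ NoutV E f).card ≤ Q ∧ (NoutV E f \ NoutV E v).card ≤ Q := by
      intro v hv
      rw [Finset.mem_filter] at hv
      rcases hv with ⟨hvT, rfl | hr⟩
      · simp
      · have e1 := Finset.card_sdiff_add_card_inter (NoutV E v) (NoutV E f)
        have e2 := Finset.card_sdiff_add_card_inter (NoutV E f) (NoutV E v)
        rw [Finset.inter_comm] at e2
        have e3 := hd v hvT
        have e4 := hd f hf
        unfold dOutV at e3 e4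
        simp only [r] at hr
        omega
    exact obs_of_close E h n P Q hE (by omega) _ (NoutV E f) hc (fun v hv => (hclose v hv).1)
      (fun v hv => (hclose v hv).2)
  · have hex' : ∀ f ∈ T, (T.filter fun v => v = f ∨ r f v).card ≤
        (2*Q+h+1) + (2*n + 3*Q + P) := by
      intro f hf
      by_contra hlt
      exact hex ⟨f, hf, (not_le.1 hlt).le⟩
    obtain ⟨J, hJT, hJc, hJ⟩ := greedy_indep T r (fun p q hpq => by simp only [r] at hpq ⊢; tauto)
      ((2*Q+h+1) + (2*n + 3*Q + P)) (by omega) hex' n hT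
    apply obs_diag E n P J hJc.ge
    intro u hu v hv hne
    have := hJ u hu v hv hne
    simp only [r, not_not] at this
    exact two_paths E h P hE u v this.1

theorem matching_of_deficiency {α : Type} [DecidableEq α] (L : Finset α) (N : α → Finset α) (g : ℕ)
    (hg : ∀ S ⊆ L, g ≤ (S.biUnion N).card + (L \ S).card) :
    ∃ I : Finset (α × α), g ≤ I.card ∧ (∀ p ∈ I, p.1 ∈ L ∧ p.2 ∈ N p.1) ∧
      (∀ p ∈ I, ∀ q ∈ I, p.1 = q.1 → p = q) ∧ (∀ p ∈ I, ∀ q ∈ I, p.2 = q.2 → p = q) := by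
  classical
  have hgL : g ≤ L.card := by simpa using hg ∅ (by simp)
  let t : {x // x ∈ L} → Finset (α ⊕ Fin (L.card - g)) := fun u =>
    (N u.1).disjSum Finset.univ
  have hall : ∀ s : Finset {x // x ∈ L}, s.card ≤ (s.biUnion t).card := by
    intro s
    rcases s.eq_empty_or_nonempty with rfl | hne
    · simp
    have e : s.biUnion t = ((s.image Subtype.val).biUnion N).disjSum Finset.univ := by
      ext x
      rcases x with x | x
      · simp [t]
      · obtain ⟨y, hy⟩ := hne
        simp only [t, Finset.mem_biUnion, Finset.inr_mem_disjSum, Finset.mem_univ, and_true, iff_true]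
        exact ⟨y, hy⟩
    have hsub : s.image Subtype.val ⊆ L := by
      intro x hx
      obtain ⟨y, -, rfl⟩ := Finset.mem_image.1 hx
      exact y.2
    have h1 := hg _ hsub
    have h2 := Finset.card_sdiff_add_card_eq_card hsub
    have h3 : (s.image Subtype.val).card = s.card :=
      Finset.card_image_of_injective _ Subtype.val_injective
    rw [e, Finset.card_disjSum, Finset.card_univ, Fintype.card_fin]
    omega
  obtain ⟨f, hf, hft⟩ := (Finset.all_card_le_biUnion_card_iff_exists_injective t).1 hall
  let A := (Finset.univ : Finset {x // x ∈ L}).filter fun u => ∃ v, f u = Sum.inl v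
  have hA : ∀ u ∈ A, ∃ v, f u = Sum.inl v := fun u hu => (Finset.mem_filter.1 hu).2
  let B := (Finset.univ : Finset {x // x ∈ L}).filter fun u => ¬ ∃ v, f u = Sum.inl v
  have hAB : A.card + B.card = L.card := by
    have := Finset.card_filter_add_card_filter_not (s := (Finset.univ : Finset {x // x ∈ L}))
      (fun u => ∃ v, f u = Sum.inl v)
    simpa [A, B] using this
  have hB : B.card ≤ L.card - g := by
    have h1 : B.card ≤ ((Finset.univ : Finset (Fin (L.card - g))).image
        (Sum.inr : _ → α ⊕ Fin (L.card - g))).card := by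
      apply Finset.card_le_card_of_injOn f
      · intro u hu
        have := (Finset.mem_filter.1 hu).2
        rcases hfu : f u with v | v
        · exact absurd ⟨v, hfu⟩ this
        · simp
      · exact hf.injOn
    refine h1.trans (Finset.card_image_le.trans ?_)
    simp
  have hinjA : Set.InjOn (fun u : {x // x ∈ L} => (u.1, (Sum.elim id (fun _ => u.1) (f u) : α))) (A : Set _) := by
    intro u _ v _ huv
    exact Subtype.ext (Prod.ext_iff.1 huv).1
  refine ⟨A.image fun u => (u.1, Sum.elim id (fun _ => u.1) (f u)), ?_, ?_, ?_, ?_⟩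
  · rw [Finset.card_image_of_injOn hinjA]; omega
  · intro p hp
    obtain ⟨u, hu, rfl⟩ := Finset.mem_image.1 hp
    obtain ⟨v, hv⟩ := hA u hu
    refine ⟨u.2, ?_⟩
    have := hft u
    rw [hv] at this
    simpa [t, hv] using this
  · intro p hp q hq hpq
    obtain ⟨u, hu, rfl⟩ := Finset.mem_image.1 hp
    obtain ⟨v, hv, rfl⟩ := Finset.mem_image.1 hq
    have : u = v := Subtype.ext hpq
    rw [this]
  · intro p hp q hq hpq
    obtain ⟨u, hu, rfl⟩ := Finset.mem_image.1 hp
    obtain ⟨v, hv, rfl⟩ := Finset.mem_image.1 hq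
    obtain ⟨x, hx⟩ := hA u hu
    obtain ⟨y, hy⟩ := hA v hv
    simp only [hx, hy, Sum.elim_inl, id] at hpq
    have : u = v := hf (by rw [hx, hy, hpq])
    rw [this]

theorem pathwidth_le_of_no_obs (E : V → V → Prop) [DecidableRel E] (K L M : ℕ)
    (hdeg : ∀ d, (Finset.univ.filter fun v => d ≤ dOutV E v ∧ dOutV E v ≤ d + K).card ≤ L)
    (hmat : ∀ d, ∀ I : Finset (V × V), (∀ p ∈ I, E p.1 p.2) →
      (∀ p ∈ I, ∀ q ∈ I, p.1 = q.1 → p = q) → (∀ p ∈ I, ∀ q ∈ I, p.2 = q.2 → p = q) →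
      (∀ p ∈ I, dOutV E p.1 < d) → (∀ p ∈ I, d + K ≤ dOutV E p.2) → I.card ≤ M) :
    pathwidth E ≤ (M + L) + (L + M) := by
  classical
  let Lo : ℕ → Finset V := fun t => Finset.univ.filter fun v => dOutV E v < t
  let N : ℕ → V → Finset V := fun t v => (NoutV E v).filter fun x => t + K ≤ dOutV E x
  let g : ℕ → Finset V → ℕ := fun t S => (S.biUnion (N t)).card + (Lo t \ S).card
  have hD : ∀ t, ∃ D ⊆ Lo t, (∀ S ⊆ Lo t, g t D ≤ g t S) ∧
      (∀ S ⊆ Lo t, g t S ≤ g t D → S.card ≤ D.card) := by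
    intro t
    obtain ⟨D0, hD0, hD0'⟩ := Finset.exists_min_image (Lo t).powerset (g t) ⟨∅, by simp⟩
    obtain ⟨D, hD, hD'⟩ := Finset.exists_max_image
      ((Lo t).powerset.filter fun S => g t S ≤ g t D0) Finset.card ⟨D0, by simpa using hD0⟩
    rw [Finset.mem_filter, Finset.mem_powerset] at hD
    refine ⟨D, hD.1, fun S hS => hD.2.trans (hD0' S (by simpa using hS)), fun S hS hg => ?_⟩
    exact hD' S (by simpa using ⟨hS, hg.trans hD.2⟩)
  choose D hDL hDmin hDmax using hD
  have hgM : ∀ t, g t (D t) ≤ M := by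
    intro t
    obtain ⟨I, hI0, hI1, hI2, hI3⟩ := matching_of_deficiency (Lo t) (N t) (g t (D t)) (hDmin t)
    refine hI0.trans (hmat t I ?_ hI2 hI3 ?_ ?_)
    · intro p hp
      simpa [N, NoutV] using (Finset.mem_filter.1 (hI1 p hp).2).1
    · intro p hp
      exact (Finset.mem_filter.1 (hI1 p hp).1).2
    · intro p hp
      exact (Finset.mem_filter.1 (hI1 p hp).2).2
  have hLoS : ∀ t, Lo t ⊆ Lo (t+1) := by
    intro t x hx
    simp only [Lo, Finset.mem_filter, Finset.mem_univ, true_and] at hx ⊢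
    omega
  have hstep : ∀ t, D t ⊆ D (t+1) := by
    intro t
    have hUL : D t ∪ D (t+1) ⊆ Lo (t+1) :=
      Finset.union_subset ((hDL t).trans (hLoS t)) (hDL (t+1))
    have hIL : D t ∩ D (t+1) ⊆ Lo t := Finset.inter_subset_left.trans (hDL t)
    have s1 : ((D t ∪ D (t+1)).biUnion (N (t+1))).card + ((D t ∩ D (t+1)).biUnion (N t)).card ≤
        ((D t).biUnion (N t)).card + ((D (t+1)).biUnion (N (t+1))).card := by
      have hN : ∀ v, N (t+1) v ⊆ N t v := by
        intro v x hx
        simp only [N, Finset.mem_filter] at hx ⊢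
        exact ⟨hx.1, by omega⟩
      rw [← Finset.card_union_add_card_inter ((D t ∪ D (t+1)).biUnion (N (t+1))),
        ← Finset.card_union_add_card_inter ((D t).biUnion (N t))]
      apply Nat.add_le_add <;> apply Finset.card_le_card
      · intro x hx
        simp only [Finset.mem_union, Finset.mem_biUnion, Finset.mem_inter] at hx ⊢
        rcases hx with ⟨a, ha | ha, hx⟩ | ⟨a, ha, hx⟩
        · exact Or.inl ⟨a, ha, hN a hx⟩
        · exact Or.inr ⟨a, ha, hx⟩
        · exact Or.inl ⟨a, ha.1, hx⟩
      · intro x hx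
        simp only [Finset.mem_union, Finset.mem_biUnion, Finset.mem_inter] at hx ⊢
        obtain ⟨⟨a, ha, hxa⟩, ⟨b, hb, hxb⟩⟩ := hx
        refine ⟨⟨b, hb.1, hxb⟩, ⟨b, hb.2, ?_⟩⟩
        simp only [N, Finset.mem_filter] at hxa hxb ⊢
        exact ⟨hxb.1, hxa.2⟩
    have c1 := Finset.card_sdiff_add_card_eq_card hUL
    have c2 := Finset.card_sdiff_add_card_eq_card hIL
    have c3 := Finset.card_sdiff_add_card_eq_card (hDL t)
    have c4 := Finset.card_sdiff_add_card_eq_card (hDL (t+1))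
    have c5 := Finset.card_union_add_card_inter (D t) (D (t+1))
    have c6 := hDmin t _ hIL
    have c7 : (D t ∪ D (t+1)).card ≤ (D (t+1)).card := by
      apply hDmax (t+1) _ hUL
      simp only [g] at c6 ⊢
      omega
    have c8 := Finset.eq_of_subset_of_card_le (Finset.subset_union_right (s₁ := D t)) c7
    rw [c8]
    exact Finset.subset_union_left
  have hdV : ∀ v, dOutV E v < Fintype.card V + 1 := fun v =>
    Nat.lt_succ_of_le (Finset.card_le_univ _)
  refine pathwidth_le_of_chain E D (Fintype.card V + 1) _ (monotone_nat_of_le_succ hstep) ?_ ?_ ?_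
  · have := hDL 0
    simpa [Lo] using this
  · have hL : Lo (Fintype.card V + 1) = Finset.univ := by
      ext v; simp only [Lo, Finset.mem_filter, Finset.mem_univ, true_and, hdV v]
    rw [← Finset.card_eq_iff_eq_univ]
    apply le_antisymm (Finset.card_le_univ _)
    have := hDmax (Fintype.card V + 1) Finset.univ (by rw [hL]) (by
      have hz : ∀ v, N (Fintype.card V + 1) v = ∅ := by
        intro v
        rw [Finset.filter_eq_empty_iff]
        intro x _
        have := hdV x
        omega
      have : g (Fintype.card V + 1) Finset.univ = 0 := by
        have hz2 : Finset.univ.biUnion (N (Fintype.card V + 1)) = ∅ := by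
          ext x; simp only [Finset.mem_biUnion, hz]; simp
        simp [g, hz2]
      omega)
    simpa using this
  · intro t
    have hsub : (D (t+1) ∪ (D (t+1)).biUnion (NoutV E)) \ D t ⊆
        ((Lo t \ D t) ∪ (Finset.univ.filter fun v => t ≤ dOutV E v ∧ dOutV E v ≤ t + K)) ∪
        ((Finset.univ.filter fun v => t+1 ≤ dOutV E v ∧ dOutV E v ≤ t+1 + K) ∪
          (D (t+1)).biUnion (N (t+1))) := by
      intro x hx
      rw [Finset.mem_sdiff] at hx
      have hx1 : x ∈ Lo (t+1) ∨ x ∈ (D (t+1)).biUnion (NoutV E) := by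
        rcases Finset.mem_union.1 hx.1 with h | h
        · exact Or.inl (hDL _ h)
        · exact Or.inr h
      simp only [Finset.mem_union, Finset.mem_sdiff, Finset.mem_biUnion, Finset.mem_filter,
        Finset.mem_univ, true_and, Lo, N] at hx1 ⊢
      by_cases hc1 : dOutV E x < t
      · exact Or.inl (Or.inl ⟨hc1, hx.2⟩)
      by_cases hc2 : dOutV E x ≤ t
      · exact Or.inl (Or.inr (by omega))
      by_cases hc3 : dOutV E x ≤ t + 1 + K
      · exact Or.inr (Or.inl (by omega))
      · rcases hx1 with h | ⟨a, ha, hax⟩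
        · omega
        · exact Or.inr (Or.inr ⟨a, ha, hax, by omega⟩)
    refine (Finset.card_le_card hsub).trans ((Finset.card_union_le _ _).trans
      (Nat.add_le_add ((Finset.card_union_le _ _).trans (Nat.add_le_add ?_ (hdeg t)))
        ((Finset.card_union_le _ _).trans (Nat.add_le_add (hdeg (t+1)) ?_))))
    · have := hgM t
      simp only [g] at this
      omega
    · have := hgM (t+1)
      simp only [g] at this
      omega

/-- For all positive `h`, `k` there is `f(h,k)` such that every `h`-semicomplete digraph
of pathwidth at least `f(h,k)` has an induced semicomplete subgraph of pathwidth at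
least `k`. -/
theorem exists_semicomplete_subgraph_of_large_pathwidth (h k : ℕ) (hh : 0 < h) (hk : 0 < k) :
    ∃ f : ℕ, 0 < f ∧
      ∀ (V : Type) [Fintype V] [DecidableEq V] (E : V → V → Prop) [DecidableRel E],
        Irreflexive E → HSemicomplete E h → f ≤ pathwidth E →
        ∃ W : Finset V, Semicomplete (fun a b : {x // x ∈ W} => E a.1 b.1) ∧
          k ≤ pathwidth (fun a b : {x // x ∈ W} => E a.1 b.1) := by
  obtain ⟨n, hn⟩ : ∃ n, n = (k+1) * (4*h+1) := ⟨_, rfl⟩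
  obtain ⟨P, hP⟩ : ∃ P, P = (h+1) * (2*(k+1) + (k+1) * ((k+1)*(k+1))) := ⟨_, rfl⟩
  obtain ⟨K, hK⟩ : ∃ K, K = P + h + 1 := ⟨_, rfl⟩
  obtain ⟨Q, hQ⟩ : ∃ Q, Q = P + h + 1 + K := ⟨_, rfl⟩
  obtain ⟨L, hL⟩ : ∃ L, L = n * ((2*Q+h+1) + (2*n + 3*Q + P)) := ⟨_, rfl⟩
  refine ⟨(n + L) + (L + n) + 1, by omega, ?_⟩
  intro V _ _ E _ _ hE hpw
  apply extract E h k n P hE hn hP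
  by_contra hO
  have := pathwidth_le_of_no_obs E K L n
    (by
      intro d
      by_contra hlt
      push Not at hlt
      refine hO (obs_of_degree E h n P d K Q hE hQ _ (by rw [← hL]; exact hlt.le) ?_)
      intro v hv
      simpa using hv)
    (by
      intro d I h1 h2 h3 h4 h5
      by_contra hlt
      push Not at hlt
      rw [hK] at h5
      exact hO (obs_of_match E h n P d hE I hlt.le h1 h2 h3 h4 h5))
  omega

end AlmostSemicomplete
end

section
/- Let G be an undirected graph on n vertices with maximum degree at most d, and let p = 1/(2d+1). Then there exists a probability distribution on independent sets I of G such that Pr(v ∈ I) = p for every v ∈ V(G), and for every S ⊆ V(G) and every t > 0, Pr(|S ∩ I| > p|S| + t) < exp(−t²/(9|S|)) and Pr(|S ∩ I| < p|S| − t) < exp(−t²/(9|S|)). -/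
open Finset

/-- Two-point Hoeffding lemma. -/
lemma two_point_hoeffding (P a b : ℝ) (h0 : 0 ≤ P) (h1 : P ≤ 1) :
    P * Real.exp a + (1 - P) * Real.exp b ≤
      Real.exp (P * a + (1 - P) * b + (a - b) ^ 2 / 2) := by
  set g := P * a + (1 - P) * b with hg
  set δ := a - b with hδ
  have hc := convexOn_exp
  have e1 := hc.2 (Set.mem_univ δ) (Set.mem_univ (-δ))
    (show 0 ≤ (2 - P) / 2 by linarith) (show 0 ≤ P / 2 by linarith) (by ring)
  have e2 := hc.2 (Set.mem_univ δ) (Set.mem_univ (-δ))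
    (show 0 ≤ (1 - P) / 2 by linarith) (show 0 ≤ (1 + P) / 2 by linarith) (by ring)
  simp only [smul_eq_mul] at e1 e2
  have ha : a = g + ((2 - P) / 2 * δ + P / 2 * -δ) := by rw [hg, hδ]; ring
  have hb : b = g + ((1 - P) / 2 * δ + (1 + P) / 2 * -δ) := by rw [hg, hδ]; ring
  have hcosh := Real.cosh_le_exp_half_sq δ
  rw [Real.cosh_eq] at hcosh
  have hA : Real.exp a = Real.exp g * Real.exp ((2 - P) / 2 * δ + P / 2 * -δ) := by
    rw [← Real.exp_add, ← ha]
  have hB : Real.exp b = Real.exp g * Real.exp ((1 - P) / 2 * δ + (1 + P) / 2 * -δ) := by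
    rw [← Real.exp_add, ← hb]
  rw [hA, hB, Real.exp_add g (δ ^ 2 / 2)]
  have hpos := Real.exp_pos g
  have key : P * Real.exp ((2 - P) / 2 * δ + P / 2 * -δ) +
      (1 - P) * Real.exp ((1 - P) / 2 * δ + (1 + P) / 2 * -δ) ≤ Real.exp (δ ^ 2 / 2) := by
    have t1 := mul_le_mul_of_nonneg_left e1 h0
    have t2 := mul_le_mul_of_nonneg_left e2 (sub_nonneg.2 h1)
    refine le_trans (add_le_add t1 t2) (le_trans (le_of_eq ?_) hcosh)
    ring
  calc _ = Real.exp g * (P * Real.exp ((2 - P) / 2 * δ + P / 2 * -δ) +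
      (1 - P) * Real.exp ((1 - P) / 2 * δ + (1 + P) / 2 * -δ)) := by ring
    _ ≤ _ := mul_le_mul_of_nonneg_left key hpos.le

/-- The quadratic form of the adjacency matrix restricted to `A`. -/
noncomputable def quadForm {V : Type} (G : SimpleGraph V) [DecidableRel G.Adj] (d : ℕ)
    (A : Finset V) (c : V → ℝ) : ℝ :=
  ∑ i ∈ A, ∑ j ∈ A, (if G.Adj i j then c i * c j / (2 * ((d : ℝ) + 1)) else 0)

lemma quadForm_insert {V : Type} [DecidableEq V] (G : SimpleGraph V) [DecidableRel G.Adj] (d : ℕ)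
    (A : Finset V) (k : V) (hk : k ∉ A) (c : V → ℝ) :
    quadForm G d (insert k A) c = quadForm G d A c +
      ∑ j ∈ A, (if G.Adj k j then c k * c j / ((d : ℝ) + 1) else 0) := by
  unfold quadForm
  rw [sum_insert hk]
  simp only [sum_insert hk, SimpleGraph.irrefl, if_false, zero_add, sum_add_distrib]
  have h : ∑ j ∈ A, (if G.Adj k j then c k * c j / ((d : ℝ) + 1) else 0) =
      ∑ j ∈ A, (if G.Adj k j then c k * c j / (2 * ((d : ℝ) + 1)) else 0) +
      ∑ j ∈ A, (if G.Adj j k then c j * c k / (2 * ((d : ℝ) + 1)) else 0) := by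
    rw [← sum_add_distrib]
    refine sum_congr rfl fun j _ => ?_
    have : (d : ℝ) + 1 ≠ 0 := by positivity
    simp only [G.adj_comm j k]
    split_ifs
    · field_simp; ring
    · simp
  rw [h]; ring

lemma quadForm_le {V : Type} [Fintype V] [DecidableEq V] (G : SimpleGraph V) [DecidableRel G.Adj]
    (d : ℕ) (hd : ∀ v : V, G.degree v ≤ d) (c : V → ℝ) :
    quadForm G d univ c ≤ (∑ i, c i ^ 2) / 2 := by
  unfold quadForm
  have hD : (0 : ℝ) < (d : ℝ) + 1 := by positivity
  have h1 : ∑ i, ∑ j, (if G.Adj i j then c i * c j / (2 * ((d : ℝ) + 1)) else 0) ≤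
      ∑ i, ∑ j, ((if G.Adj i j then c i ^ 2 / (4 * ((d : ℝ) + 1)) else 0) +
        (if G.Adj i j then c j ^ 2 / (4 * ((d : ℝ) + 1)) else 0)) := by
    refine sum_le_sum fun i _ => sum_le_sum fun j _ => ?_
    split_ifs
    · rw [← add_div, div_le_div_iff₀ (by positivity) (by positivity)]
      nlinarith [mul_nonneg (sq_nonneg (c i - c j)) hD.le]
    · simp
  have h2 : ∀ i, ∑ j, (if G.Adj i j then c i ^ 2 / (4 * ((d : ℝ) + 1)) else 0) ≤ c i ^ 2 / 4 := by
    intro i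
    rw [← sum_filter, sum_const, nsmul_eq_mul, ← G.neighborFinset_eq_filter,
      G.card_neighborFinset_eq_degree]
    have : (G.degree i : ℝ) ≤ d := by exact_mod_cast hd i
    rw [mul_div_assoc', div_le_div_iff₀ (by positivity) (by positivity)]
    nlinarith [mul_nonneg (sq_nonneg (c i)) (sub_nonneg.2 this), sq_nonneg (c i)]
  refine h1.trans ?_
  simp only [sum_add_distrib]
  have h3 : ∑ i, ∑ j, (if G.Adj i j then c j ^ 2 / (4 * ((d : ℝ) + 1)) else 0) =
      ∑ i, ∑ j, (if G.Adj i j then c i ^ 2 / (4 * ((d : ℝ) + 1)) else 0) := by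
    rw [sum_comm]
    simp only [G.adj_comm]
  rw [h3]
  have h4 := sum_le_sum fun i (_ : i ∈ (univ : Finset V)) => h2 i
  rw [← sum_div] at h4
  linarith

/-- The inductive invariant: a good distribution on independent subsets of `A`. -/
structure GoodDist {V : Type} [Fintype V] [DecidableEq V]
    (G : SimpleGraph V) [DecidableRel G.Adj] (d : ℕ) (A : Finset V) (w : Finset V → ℝ) : Prop where
  nonneg : ∀ I, 0 ≤ w I
  total : ∑ I, w I = 1
  indep : ∀ I : Finset V, w I ≠ 0 → I ⊆ A ∧ ∀ u ∈ I, ∀ v ∈ I, ¬ G.Adj u v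
  marg : ∀ v ∈ A, ∑ I, w I * (if v ∈ I then 1 else 0) = 1 / (2 * (d : ℝ) + 1)
  conc : ∀ (l : V → ℝ) (f : Finset V → ℝ), (∀ v, 0 ≤ l v) →
    (∀ I, ∀ j ∈ A, j ∉ I → |f (insert j I) - f I| ≤ l j) →
    ∃ c : V → ℝ, (∀ v, 0 ≤ c v) ∧
      ∑ v ∈ A, c v ^ 2 ≤ ∑ v ∈ A, l v * c v + quadForm G d A c ∧
      ∑ I, w I * Real.exp (f I) ≤ Real.exp (∑ I, w I * f I + (∑ v ∈ A, c v ^ 2) / 2)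

lemma goodDist_empty {V : Type} [Fintype V] [DecidableEq V]
    (G : SimpleGraph V) [DecidableRel G.Adj] (d : ℕ) :
    GoodDist G d ∅ (fun I => if I = ∅ then 1 else 0) where
  nonneg I := by split_ifs <;> norm_num
  total := by simp
  indep I h := by
    have : I = ∅ := by by_contra h'; simp [h'] at h
    subst this; simp
  marg v hv := by simp at hv
  conc l f _ _ := ⟨fun _ => 0, by simp, by simp [quadForm], by simp⟩

/-- One step of the random greedy process. -/
noncomputable def stepDist {V : Type} [Fintype V] [DecidableEq V] (w P : Finset V → ℝ) (k : V) :
    Finset V → ℝ := fun J =>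
  ∑ I, w I * (P I * (if J = insert k I then 1 else 0) + (1 - P I) * (if J = I then 1 else 0))

lemma stepDist_sum {V : Type} [Fintype V] [DecidableEq V] (w P : Finset V → ℝ) (k : V)
    (f : Finset V → ℝ) :
    ∑ J, stepDist w P k J * f J = ∑ I, w I * (P I * f (insert k I) + (1 - P I) * f I) := by
  unfold stepDist
  simp only [sum_mul]
  rw [sum_comm]
  refine sum_congr rfl fun I _ => ?_
  simp only [mul_add, add_mul, sum_add_distrib, mul_ite, ite_mul, mul_one, mul_zero, zero_mul,
    sum_ite_eq', mem_univ, if_true]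
  ring

lemma goodDist_step {V : Type} [Fintype V] [DecidableEq V]
    (G : SimpleGraph V) [DecidableRel G.Adj] (d : ℕ) (hd : ∀ v : V, G.degree v ≤ d)
    (A : Finset V) (k : V) (hk : k ∉ A) (w : Finset V → ℝ) (hw : GoodDist G d A w) :
    ∃ w', GoodDist G d (insert k A) w' := by
  have hD : (0 : ℝ) < (d : ℝ) + 1 := by positivity
  have hD2 : (0 : ℝ) < 2 * (d : ℝ) + 1 := by positivity
  set Z := ∑ I, w I * (if ∀ j ∈ I, ¬ G.Adj k j then 1 else 0) with hZ
  have hmle : ∀ v, ∑ I, w I * (if v ∈ I then 1 else 0) ≤ 1 / (2 * (d : ℝ) + 1) := by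
    intro v
    by_cases hv : v ∈ A
    · exact (hw.marg v hv).le
    · rw [sum_eq_zero]
      · positivity
      · intro I _
        by_cases hI : w I = 0
        · simp [hI]
        · have : v ∉ I := fun h => hv ((hw.indep I hI).1 h)
          simp [this]
  have hZge : ((d : ℝ) + 1) / (2 * (d : ℝ) + 1) ≤ Z := by
    have h1 : 1 - Z ≤ ∑ j ∈ G.neighborFinset k, ∑ I, w I * (if j ∈ I then 1 else 0) := by
      have ht : 1 - Z = ∑ I, (w I - w I * (if ∀ j ∈ I, ¬ G.Adj k j then 1 else 0)) := by
        rw [sum_sub_distrib, hw.total]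
      rw [sum_comm, ht]
      refine sum_le_sum fun I _ => ?_
      rw [← mul_sum]
      have hn := hw.nonneg I
      have hs : (0 : ℝ) ≤ ∑ j ∈ G.neighborFinset k, (if j ∈ I then (1 : ℝ) else 0) :=
        sum_nonneg fun j _ => by split_ifs <;> norm_num
      by_cases h : ∀ j ∈ I, ¬ G.Adj k j
      · simp only [if_pos h, mul_one, sub_self]
        exact mul_nonneg hn hs
      · simp only [if_neg h, mul_zero, sub_zero]
        push Not at h
        obtain ⟨j, hj, hjk⟩ := h
        have : (1 : ℝ) ≤ ∑ j ∈ G.neighborFinset k, (if j ∈ I then (1 : ℝ) else 0) := by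
          have := single_le_sum (f := fun j => if j ∈ I then (1 : ℝ) else 0)
            (s := G.neighborFinset k) (fun j _ => by split_ifs <;> norm_num)
            ((G.mem_neighborFinset k j).2 hjk)
          simpa [hj] using this
        nlinarith
    have h2 : ∑ j ∈ G.neighborFinset k, ∑ I, w I * (if j ∈ I then (1 : ℝ) else 0) ≤
        d * (1 / (2 * (d : ℝ) + 1)) := by
      refine (sum_le_sum fun j _ => hmle j).trans ?_
      rw [sum_const, nsmul_eq_mul, G.card_neighborFinset_eq_degree]
      have : (G.degree k : ℝ) ≤ d := by exact_mod_cast hd k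
      gcongr
    have h3 : ((d : ℝ) + 1) / (2 * (d : ℝ) + 1) = 1 - d * (1 / (2 * (d : ℝ) + 1)) := by
      field_simp; ring
    linarith
  have hZpos : 0 < Z := lt_of_lt_of_le (by positivity) hZge
  set q := 1 / (2 * (d : ℝ) + 1) / Z with hq
  have hq0 : 0 ≤ q := by positivity
  have hqle : q ≤ 1 / ((d : ℝ) + 1) := by
    rw [hq, div_le_iff₀ hZpos]
    calc 1 / (2 * (d : ℝ) + 1) = 1 / ((d : ℝ) + 1) * (((d : ℝ) + 1) / (2 * (d : ℝ) + 1)) := by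
          field_simp
      _ ≤ _ := by gcongr
  have hq1 : q ≤ 1 := hqle.trans (by rw [div_le_one hD]; linarith [Nat.cast_nonneg (α := ℝ) d])
  set P : Finset V → ℝ := fun I => if ∀ j ∈ I, ¬ G.Adj k j then q else 0 with hP
  have hP0 : ∀ I, 0 ≤ P I := fun I => by simp only [hP]; split_ifs <;> simp [hq0]
  have hP1 : ∀ I, P I ≤ 1 := fun I => by simp only [hP]; split_ifs <;> simp [hq1]
  have hPd : ∀ I j, |P (insert j I) - P I| ≤ if G.Adj k j then q else 0 := by
    intro I j
    by_cases hj : G.Adj k j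
    · have : P (insert j I) = 0 := by simp [hP, hj]
      rw [this, if_pos hj, zero_sub, abs_neg, abs_of_nonneg (hP0 I)]
      simp only [hP]; split_ifs <;> simp [hq0]
    · have : P (insert j I) = P I := by simp [hP, hj]
      simp [this, hj]
  refine ⟨stepDist w P k, ?_, ?_, ?_, ?_, ?_⟩
  · intro J
    refine sum_nonneg fun I _ => mul_nonneg (hw.nonneg I) (add_nonneg
      (mul_nonneg (hP0 I) (by split_ifs <;> norm_num))
      (mul_nonneg (sub_nonneg.2 (hP1 I)) (by split_ifs <;> norm_num)))
  · have := stepDist_sum w P k (fun _ => 1)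
    simp only [mul_one, add_sub_cancel] at this
    rw [this, hw.total]
  · intro J hJ
    obtain ⟨I, -, hI⟩ := exists_ne_zero_of_sum_ne_zero hJ
    have hwI : w I ≠ 0 := left_ne_zero_of_mul hI
    obtain ⟨hIA, hind⟩ := hw.indep I hwI
    by_cases h1 : J = I
    · subst h1
      exact ⟨hIA.trans (subset_insert _ _), hind⟩
    · have h2 : J = insert k I := by
        by_contra h2; simp [h1, h2] at hI
      have h3 : P I ≠ 0 := by
        intro h3; simp [h1, h3] at hI
      have h4 : ∀ j ∈ I, ¬ G.Adj k j := by
        by_contra h4; exact h3 (by simp only [hP]; rw [if_neg h4])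
      subst h2
      refine ⟨insert_subset_insert _ hIA, ?_⟩
      intro u hu v hv
      rw [mem_insert] at hu hv
      rcases hu with rfl | hu <;> rcases hv with rfl | hv
      · exact G.irrefl
      · exact h4 v hv
      · exact fun h => h4 u hu h.symm
      · exact hind u hu v hv
  · intro v hv
    rw [stepDist_sum w P k (fun J => if v ∈ J then 1 else 0)]
    rw [mem_insert] at hv
    rcases hv with rfl | hv
    · have : ∀ I, w I * (P I * (if v ∈ insert v I then 1 else 0) +
          (1 - P I) * (if v ∈ I then 1 else 0)) =
          q * (w I * (if ∀ j ∈ I, ¬ G.Adj v j then 1 else 0)) := by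
        intro I
        by_cases hI : w I = 0
        · simp [hI]
        · have : v ∉ I := fun h => hk ((hw.indep I hI).1 h)
          simp only [mem_insert_self, if_true, this, if_false, hP]
          split_ifs <;> ring
      rw [sum_congr rfl fun I _ => this I, ← mul_sum, ← hZ, hq]
      field_simp
    · rw [← hw.marg v hv]
      have hvk : v ≠ k := fun h => hk (h ▸ hv)
      refine sum_congr rfl fun I _ => ?_
      simp only [mem_insert, hvk, false_or]
      ring
  · intro l f hl hf
    set g : Finset V → ℝ := fun I => P I * f (insert k I) + (1 - P I) * f I with hg
    have hfk : ∀ I, |f (insert k I) - f I| ≤ l k := by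
      intro I
      by_cases hkI : k ∈ I
      · rw [insert_eq_of_mem hkI]; simpa using hl k
      · exact hf I k (mem_insert_self _ _) hkI
    obtain ⟨c, hc0, hc1, hc2⟩ := hw.conc
      (fun j => l j + (if G.Adj k j then q else 0) * l k) g
      (fun j => add_nonneg (hl j) (mul_nonneg (by split_ifs <;> simp [hq0]) (hl k))) (by
        intro I j hj hjI
        have hjk : j ≠ k := fun h => hk (h ▸ hj)
        have e1 := hf (insert k I) j (mem_insert_of_mem hj) (by simp [hjk, hjI])
        have e2 := hf I j (mem_insert_of_mem hj) hjI
        have e3 := hfk I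
        have e4 := hPd I j
        have hp0 := hP0 (insert j I)
        have hp1 := sub_nonneg.2 (hP1 (insert j I))
        have : g (insert j I) - g I =
            P (insert j I) * (f (insert j (insert k I)) - f (insert k I)) +
            (1 - P (insert j I)) * (f (insert j I) - f I) +
            (P (insert j I) - P I) * (f (insert k I) - f I) := by
          simp only [hg]
          rw [insert_comm k j I]
          ring
        rw [this]
        refine (abs_add_le _ _).trans (add_le_add ((abs_add_le _ _).trans ?_) ?_)
        · rw [abs_mul, abs_mul, abs_of_nonneg hp0, abs_of_nonneg hp1]
          have := mul_le_mul_of_nonneg_left e1 hp0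
          have := mul_le_mul_of_nonneg_left e2 hp1
          linarith
        · rw [abs_mul]
          exact mul_le_mul e4 e3 (abs_nonneg _) ((abs_nonneg _).trans e4))
    have hne : ∀ v ∈ A, v ≠ k := fun v hv h => hk (h ▸ hv)
    have hcA : ∀ v ∈ A, Function.update c k (l k) v = c v := fun v hv => by
      rw [Function.update_of_ne (hne v hv)]
    have hsq : ∑ v ∈ A, Function.update c k (l k) v ^ 2 = ∑ v ∈ A, c v ^ 2 :=
      sum_congr rfl fun v hv => by rw [hcA v hv]
    refine ⟨Function.update c k (l k), ?_, ?_, ?_⟩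
    · intro v
      by_cases h : v = k
      · subst h; simpa using hl v
      · rw [Function.update_of_ne h]; exact hc0 v
    · rw [quadForm_insert G d A k hk, sum_insert hk, sum_insert hk, hsq, Function.update_self]
      have r1 : ∑ v ∈ A, l v * Function.update c k (l k) v = ∑ v ∈ A, l v * c v :=
        sum_congr rfl fun v hv => by rw [hcA v hv]
      have r2 : quadForm G d A (Function.update c k (l k)) = quadForm G d A c := by
        unfold quadForm
        exact sum_congr rfl fun i hi => sum_congr rfl fun j hj => by rw [hcA i hi, hcA j hj]
      have r3 : ∑ v ∈ A, ((if G.Adj k v then q else 0) * l k) * c v ≤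
          ∑ j ∈ A, (if G.Adj k j then l k * Function.update c k (l k) j / ((d : ℝ) + 1) else 0) := by
        refine sum_le_sum fun j hj => ?_
        rw [hcA j hj]
        split_ifs
        · have := mul_le_mul_of_nonneg_right hqle (mul_nonneg (hl k) (hc0 j))
          calc q * l k * c j = q * (l k * c j) := by ring
            _ ≤ _ := this
            _ = _ := by ring
        · simp
      simp only [add_mul, sum_add_distrib] at hc1
      rw [r1, r2]
      nlinarith
    · rw [stepDist_sum w P k (fun J => Real.exp (f J)), stepDist_sum w P k f, sum_insert hk, hsq,
        Function.update_self]
      have : ∀ I, w I * (P I * Real.exp (f (insert k I)) + (1 - P I) * Real.exp (f I)) ≤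
          Real.exp (l k ^ 2 / 2) * (w I * Real.exp (g I)) := by
        intro I
        have h1 := two_point_hoeffding (P I) (f (insert k I)) (f I) (hP0 I) (hP1 I)
        have h2 : (f (insert k I) - f I) ^ 2 ≤ l k ^ 2 := sq_le_sq' (by
          have := (abs_le.1 (hfk I)).1; linarith) (abs_le.1 (hfk I)).2
        have h3 : Real.exp (P I * f (insert k I) + (1 - P I) * f I +
            (f (insert k I) - f I) ^ 2 / 2) ≤ Real.exp (l k ^ 2 / 2) * Real.exp (g I) := by
          rw [← Real.exp_add]
          apply Real.exp_le_exp.2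
          simp only [hg]; linarith
        calc _ ≤ w I * (Real.exp (l k ^ 2 / 2) * Real.exp (g I)) :=
              mul_le_mul_of_nonneg_left (h1.trans h3) (hw.nonneg I)
          _ = _ := by ring
      refine (sum_le_sum fun I _ => this I).trans ?_
      rw [← mul_sum]
      refine (mul_le_mul_of_nonneg_left hc2 (Real.exp_pos _).le).trans ?_
      rw [← Real.exp_add]
      apply Real.exp_le_exp.2
      have : ∑ I, w I * g I = ∑ I, w I * (P I * f (insert k I) + (1 - P I) * f I) := rfl
      rw [this]
      linarith

lemma exists_goodDist {V : Type} [Fintype V] [DecidableEq V]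
    (G : SimpleGraph V) [DecidableRel G.Adj] (d : ℕ) (hd : ∀ v : V, G.degree v ≤ d)
    (A : Finset V) : ∃ w, GoodDist G d A w := by
  induction A using Finset.induction_on with
  | empty => exact ⟨_, goodDist_empty G d⟩
  | insert k A hk ih =>
    obtain ⟨w, hw⟩ := ih
    exact goodDist_step G d hd A k hk w hw

/-- Moment generating function bound. -/
lemma goodDist_mgf {V : Type} [Fintype V] [DecidableEq V]
    (G : SimpleGraph V) [DecidableRel G.Adj] (d : ℕ) (hd : ∀ v : V, G.degree v ≤ d)
    (w : Finset V → ℝ) (hw : GoodDist G d univ w) (S : Finset V) (a : ℝ) :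
    ∑ I, w I * Real.exp (a * ((S ∩ I).card : ℝ)) ≤
      Real.exp (a * ((S.card : ℝ) / (2 * (d : ℝ) + 1)) + 2 * a ^ 2 * S.card) := by
  obtain ⟨c, hc0, hc1, hc2⟩ := hw.conc (fun v => if v ∈ S then |a| else 0)
    (fun I => a * ((S ∩ I).card : ℝ)) (fun v => by split_ifs <;> simp) (by
      intro I j _ hj
      by_cases hS : j ∈ S
      · have : j ∉ S ∩ I := by simp [hj]
        rw [inter_insert_of_mem hS, card_insert_of_notMem this, if_pos hS]
        push_cast
        rw [← mul_sub]; simp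
      · rw [inter_insert_of_notMem hS]; simp [hS])
  have hq := quadForm_le G d hd c
  have hE : ∑ I, w I * (a * ((S ∩ I).card : ℝ)) = a * ((S.card : ℝ) / (2 * (d : ℝ) + 1)) := by
    have : ∀ I : Finset V, w I * (a * ((S ∩ I).card : ℝ)) =
        ∑ v ∈ S, a * (w I * (if v ∈ I then 1 else 0)) := by
      intro I
      rw [← mul_sum, ← mul_sum, sum_boole, filter_mem_eq_inter]
      ring
    rw [sum_congr rfl fun I _ => this I, sum_comm]
    simp only [← mul_sum]
    rw [sum_congr rfl fun v _ => hw.marg v (mem_univ v), sum_const, nsmul_eq_mul]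
    ring
  have hl : ∑ v, (if v ∈ S then |a| else 0) * c v ≤ a ^ 2 * S.card + (∑ v, c v ^ 2) / 4 := by
    have h1 : a ^ 2 * S.card = ∑ v : V, (if v ∈ S then |a| else 0) ^ 2 := by
      simp [ite_pow, mul_comm]
    rw [h1, sum_div, ← sum_add_distrib]
    refine sum_le_sum fun v _ => ?_
    nlinarith [sq_nonneg ((if v ∈ S then |a| else 0) - c v / 2)]
  refine hc2.trans (Real.exp_le_exp.2 ?_)
  rw [hE]
  linarith

/-- Markov inequality step. -/
lemma goodDist_tail {V : Type} [Fintype V] [DecidableEq V]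
    (G : SimpleGraph V) [DecidableRel G.Adj] (d : ℕ) (hd : ∀ v : V, G.degree v ≤ d)
    (w : Finset V → ℝ) (hw : GoodDist G d univ w) (S : Finset V) (t : ℝ) (ht : 0 < t)
    (hS : 0 < (S.card : ℝ)) (s : ℝ) (hs : s ^ 2 = 1)
    (p : Finset V → Prop) [DecidablePred p]
    (hp : ∀ I, p I → t ≤ s * (((S ∩ I).card : ℝ) - (S.card : ℝ) / (2 * (d : ℝ) + 1))) :
    ∑ I ∈ univ.filter p, w I < Real.exp (-(t ^ 2) / (9 * (S.card : ℝ))) := by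
  set N : ℝ := (S.card : ℝ) with hN
  set m : ℝ := N / (2 * (d : ℝ) + 1) with hm
  set a : ℝ := t / (4 * N) with ha
  have ha0 : 0 < a := by positivity
  have hmgf := goodDist_mgf G d hd w hw S (s * a)
  have h1 : ∑ I ∈ univ.filter p, w I ≤
      Real.exp (-(a * t) - s * a * m) * ∑ I, w I * Real.exp (s * a * ((S ∩ I).card : ℝ)) := by
    rw [mul_sum, sum_filter]
    refine sum_le_sum fun I _ => ?_
    have e : Real.exp (-(a * t) - s * a * m) * (w I * Real.exp (s * a * ((S ∩ I).card : ℝ))) =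
        w I * Real.exp (a * (s * (((S ∩ I).card : ℝ) - m) - t)) := by
      rw [mul_left_comm, ← Real.exp_add]; congr 2; ring
    rw [e]
    split_ifs with h
    · have h2 : 0 ≤ a * (s * (((S ∩ I).card : ℝ) - m) - t) :=
        mul_nonneg ha0.le (sub_nonneg.2 (hp I h))
      have := mul_le_mul_of_nonneg_left (Real.one_le_exp h2) (hw.nonneg I)
      linarith
    · exact mul_nonneg (hw.nonneg I) (Real.exp_pos _).le
  refine h1.trans_lt ((mul_le_mul_of_nonneg_left hmgf (Real.exp_pos _).le).trans_lt ?_)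
  rw [← Real.exp_add]
  apply Real.exp_lt_exp.2
  have h3 : (-(a * t) - s * a * m) + (s * a * m + 2 * (s * a) ^ 2 * N) = -(t ^ 2) / (8 * N) := by
    rw [mul_pow, hs, ha]; field_simp; ring
  rw [h3, div_lt_div_iff₀ (by positivity) (by positivity)]
  have : 0 < t ^ 2 * N := by positivity
  nlinarith

/-- There is a random independent set `I` of a graph of maximum degree at most `d`
(modelled as a weight function `w` on `Finset V` giving a probability distribution
supported on independent sets) with uniform marginals `p = 1/(2d+1)` and two-sided
Chernoff-type concentration of `|S ∩ I|` for every vertex set `S`. -/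
theorem exists_random_independent_set {V : Type} [Fintype V] [DecidableEq V]
    (G : SimpleGraph V) [DecidableRel G.Adj] (n d : ℕ)
    (hn : Fintype.card V = n) (hd : ∀ v : V, G.degree v ≤ d) :
    ∃ w : Finset V → ℝ,
      (∀ I, 0 ≤ w I) ∧ (∑ I : Finset V, w I) = 1 ∧
      (∀ I : Finset V, w I ≠ 0 → ∀ u ∈ I, ∀ v ∈ I, ¬ G.Adj u v) ∧
      (∀ v : V,
        (∑ I ∈ Finset.univ.filter (fun I : Finset V => v ∈ I), w I)
          = 1 / (2 * (d : ℝ) + 1)) ∧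
      ∀ (S : Finset V) (t : ℝ), 0 < t →
        (∑ I ∈ Finset.univ.filter
            (fun I : Finset V =>
              ((S ∩ I).card : ℝ) > (S.card : ℝ) / (2 * (d : ℝ) + 1) + t), w I)
          < Real.exp (-(t ^ 2) / (9 * (S.card : ℝ))) ∧
        (∑ I ∈ Finset.univ.filter
            (fun I : Finset V =>
              ((S ∩ I).card : ℝ) < (S.card : ℝ) / (2 * (d : ℝ) + 1) - t), w I)
          < Real.exp (-(t ^ 2) / (9 * (S.card : ℝ))) := by
  obtain ⟨w, hw⟩ := exists_goodDist G d hd Finset.univ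
  refine ⟨w, hw.nonneg, hw.total, fun I hI => (hw.indep I hI).2, ?_, ?_⟩
  · intro v
    rw [← hw.marg v (Finset.mem_univ v), Finset.sum_filter]
    refine Finset.sum_congr rfl fun I _ => ?_
    split_ifs <;> simp
  · intro S t ht
    rcases S.eq_empty_or_nonempty with rfl | hS
    · constructor
      · simp [not_lt.2 ht.le]
      · simp [not_lt.2 ht.le]
    · have hN : 0 < (S.card : ℝ) := by exact_mod_cast hS.card_pos
      constructor
      · exact goodDist_tail G d hd w hw S t ht hN 1 (by norm_num) _ (fun I h => by linarith)
      · exact goodDist_tail G d hd w hw S t ht hN (-1) (by norm_num) _ (fun I h => by linarith)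
end
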